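/- arXiv:2007.10664 — 3 statements merged into one kernel-verified Lean document; each statement's English description precedes it below -/
import Mathlib

section
/- The simultaneous projection operator T_ω is a bounded linear operator on H which is self-adjoint, satisfies ‖T_ω‖ ≤ 1, and whose fixed point set {x ∈ H : T_ω x = x} equals M = ⋂ᵢ Mᵢ. -/
open RealInnerProductSpace

/-!
Since `‖ω i • P_{Mᵢ}‖ ≤ ω i`, the series of operators converges in operator norm, and symmetry and
the bound `‖T‖ ≤ 1` pass to the sum. If `T z = z`, then `z` is a convex combination of the vectors
`P_{Mᵢ} z`, none of which is longer than `z`. Since balls in an inner product space are strictly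
convex, `P_{Mᵢ} z = z` for all `i`.
-/

section ConvexSeries

variable {𝕜 E ι : Type*} [RCLike 𝕜] {ω : ι → ℝ}

theorem norm_ofReal_smul_le [NormedAddCommGroup E] [NormedSpace 𝕜 E] {r : ℝ} (hr : 0 ≤ r)
    {x : E} (hx : ‖x‖ ≤ 1) : ‖(r : 𝕜) • x‖ ≤ r := by
  rw [norm_smul, RCLike.norm_of_nonneg hr]
  exact mul_le_of_le_one_right hr hx

variable [NormedAddCommGroup E] [InnerProductSpace 𝕜 E]

theorem eq_of_hasSum_ofReal_smul_of_norm_le (hω : ∀ i, 0 < ω i) (hωsum : HasSum ω 1)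
    {v : ι → E} {z : E} (hz : HasSum (fun i => (ω i : 𝕜) • v i) z) (hv : ∀ i, ‖v i‖ ≤ ‖z‖)
    (i : ι) : v i = z := by
  have inner_le (j : ι) : RCLike.re (inner 𝕜 (v j) z) ≤ ‖z‖ ^ 2 :=
    calc RCLike.re (inner 𝕜 (v j) z) ≤ ‖v j‖ * ‖z‖ := re_inner_le_norm _ _
      _ ≤ ‖z‖ * ‖z‖ := by gcongr; exact hv j
      _ = ‖z‖ ^ 2 := (sq _).symm
  have hasSum_inner : HasSum (fun j => ω j * RCLike.re (inner 𝕜 (v j) z)) (‖z‖ ^ 2) := by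
    simpa [inner_smul_right, inner_re_symm (𝕜 := 𝕜) z] using
      (hz.mapL (innerSL 𝕜 z)).mapL RCLike.reCLM
  have hasSum_norm_sq : HasSum (fun j => ω j * ‖z‖ ^ 2) (‖z‖ ^ 2) := by
    simpa only [one_mul] using hωsum.mul_right (‖z‖ ^ 2)
  refine eq_of_norm_le_re_inner_eq_norm_sq (𝕜 := 𝕜) (hv i) ((inner_le i).eq_of_not_lt fun hlt => ?_)
  exact (hasSum_lt (fun j => mul_le_mul_of_nonneg_left (inner_le j) (hω j).le)
    (mul_lt_mul_of_pos_left hlt (hω i)) hasSum_inner hasSum_norm_sq).false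

theorem apply_eq_self_iff_of_hasSum_ofReal_smul (hω : ∀ i, 0 < ω i) (hωsum : HasSum ω 1)
    {A : ι → E →L[𝕜] E} (hA : ∀ i, ‖A i‖ ≤ 1) {T : E →L[𝕜] E}
    (hT : HasSum (fun i => (ω i : 𝕜) • A i) T) {z : E} : T z = z ↔ ∀ i, A i z = z := by
  have hTz : HasSum (fun i => (ω i : 𝕜) • A i z) (T z) :=
    hT.mapL (ContinuousLinearMap.apply 𝕜 E z)
  refine ⟨fun hz => eq_of_hasSum_ofReal_smul_of_norm_le hω hωsum (hz ▸ hTz) fun i => ?_,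
    fun hz => hTz.unique ?_⟩
  · simpa only [one_mul] using (A i).le_of_opNorm_le (hA i) z
  · simpa [hz] using (hωsum.mapL (RCLike.ofRealCLM (K := 𝕜))).smul_const z

end ConvexSeries

section SimultaneousProjection

variable {𝕜 H ι : Type*} [RCLike 𝕜] [NormedAddCommGroup H] [InnerProductSpace 𝕜 H]
  {ω : ι → ℝ} {M : ι → Submodule 𝕜 H} [∀ i, (M i).HasOrthogonalProjection]

variable (ω M) in
/-- The simultaneous projection operator `T_ω = ∑ᵢ ω i • P_{Mᵢ}`. The series is taken in the
operator norm and has the junk value `0` where it diverges. -/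
noncomputable def simultaneousProjection : H →L[𝕜] H :=
  ∑' i, (ω i : 𝕜) • (M i).starProjection

theorem norm_simultaneousProjection_le (hω : ∀ i, 0 ≤ ω i) {s : ℝ} (hωsum : HasSum ω s) :
    ‖simultaneousProjection ω M‖ ≤ s :=
  tsum_of_norm_bounded hωsum fun i => norm_ofReal_smul_le (hω i) (M i).starProjection_norm_le

variable [CompleteSpace H]

theorem hasSum_simultaneousProjection (hω : ∀ i, 0 ≤ ω i) (hωsum : Summable ω) :
    HasSum (fun i => (ω i : 𝕜) • (M i).starProjection) (simultaneousProjection ω M) :=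
  (Summable.of_norm_bounded hωsum fun i =>
    norm_ofReal_smul_le (hω i) (M i).starProjection_norm_le).hasSum

theorem hasSum_simultaneousProjection_apply (hω : ∀ i, 0 ≤ ω i) (hωsum : Summable ω) (z : H) :
    HasSum (fun i => (ω i : 𝕜) • (M i).starProjection z) (simultaneousProjection ω M z) :=
  (hasSum_simultaneousProjection hω hωsum).mapL (ContinuousLinearMap.apply 𝕜 H z)

theorem isSelfAdjoint_simultaneousProjection : IsSelfAdjoint (simultaneousProjection ω M) :=
  tsum_star.trans <| tsum_congr fun i =>
    IsSelfAdjoint.smul (RCLike.conj_ofReal (ω i)) (isSelfAdjoint_starProjection (M i))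

theorem simultaneousProjection_apply_eq_self_iff (hω : ∀ i, 0 < ω i) (hωsum : HasSum ω 1) {z : H} :
    simultaneousProjection ω M z = z ↔ z ∈ ⨅ i, M i := by
  rw [apply_eq_self_iff_of_hasSum_ofReal_smul hω hωsum (fun i => (M i).starProjection_norm_le)
    (hasSum_simultaneousProjection (fun i => (hω i).le) hωsum.summable)]
  simp only [Submodule.starProjection_eq_self_iff, Submodule.mem_iInf]

end SimultaneousProjection

theorem stmt_1_general {𝕜 H ι : Type*} [RCLike 𝕜] [NormedAddCommGroup H] [InnerProductSpace 𝕜 H]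
    [CompleteSpace H] (ω : ι → ℝ) (hω : ∀ i, 0 < ω i) (hωsum : HasSum ω 1)
    (M : ι → Submodule 𝕜 H) [∀ i, (M i).HasOrthogonalProjection] :
    ∃ T : H →L[𝕜] H,
      (∀ z : H, HasSum (fun i => (ω i : 𝕜) • ((M i).orthogonalProjectionOnto z : H)) (T z)) ∧
      IsSelfAdjoint T ∧ ‖T‖ ≤ 1 ∧
      {z : H | T z = z} = ((⨅ i, M i : Submodule 𝕜 H) : Set H) :=
  have hω' (i : ι) : 0 ≤ ω i := (hω i).le
  ⟨simultaneousProjection ω M, hasSum_simultaneousProjection_apply hω' hωsum.summable,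
    isSelfAdjoint_simultaneousProjection, norm_simultaneousProjection_le hω' hωsum,
    Set.ext fun _ => simultaneousProjection_apply_eq_self_iff hω hωsum⟩

/-- The simultaneous projection operator `T_ω x = ∑ᵢ ω i • P_{Mᵢ} x`
is a bounded linear operator on `H`, self-adjoint, of norm at most one, and its
fixed point set is `M = ⨅ᵢ Mᵢ`. -/
theorem stmt_1 {H : Type*} [NormedAddCommGroup H] [InnerProductSpace ℝ H] [CompleteSpace H]
    {ι : Type*} [Countable ι] [Nonempty ι]
    (ω : ι → ℝ) (hω : ∀ i, 0 < ω i) (hωsum : HasSum ω 1)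
    (M : ι → Submodule ℝ H) [∀ i, CompleteSpace (M i)]
    (hMnt : ∀ i, M i ≠ ⊥) :
    ∃ T : H →L[ℝ] H,
      (∀ z : H, T z = ∑' i, ω i • ((Submodule.orthogonalProjectionOnto (M i) z : H))) ∧
      IsSelfAdjoint T ∧ ‖T‖ ≤ 1 ∧
      {z : H | T z = z} = ((⨅ i, M i : Submodule ℝ H) : Set H) := by
  obtain ⟨T, hT, hT_props⟩ := stmt_1_general ω hω hωsum M
  exact ⟨T, fun z => (hT z).tsum_eq.symm, hT_props⟩
end

section
/- For every x ∈ H, the iterates of the simultaneous projection method converge in norm to the projection of x onto the intersection: ‖T_ω^k x − P_M x‖ → 0 as k → ∞. -/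
open RealInnerProductSpace

open Filter Function Topology RCLike

/-!
A firmly nonexpansive map `f` satisfies `‖f x - f z‖² + ‖x - f x‖² ≤ ‖x - z‖²` at each of its fixed
points `z`, so the steps of an orbit are square summable and `fᵏ x - fᵏ⁺¹ x → 0`. For a linear
contraction `T` of a Hilbert space this says that `Tᵏ → 0` on the range of `1 - T`, whose closure is
the orthogonal complement of the fixed points of `T`; hence `Tᵏ x` tends to the projection of `x`
onto the fixed points. Orthogonal projections are firmly nonexpansive, this property survives
infinite convex combinations, and by strict convexity of the norm the fixed points of a convex
combination with positive weights are the common fixed points of its terms.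
-/

section WeightedSums

variable {𝕜 E ι : Type*} [RCLike 𝕜]

theorem summable_ofReal_smul_of_norm_le [NormedAddCommGroup E] [NormedSpace 𝕜 E] [CompleteSpace E]
    {ω : ι → ℝ} {a : ι → E} {C : ℝ} (hω : ∀ i, 0 ≤ ω i) (hωsum : Summable ω)
    (ha : ∀ i, ‖a i‖ ≤ C) : Summable fun i => (ω i : 𝕜) • a i := by
  refine .of_norm_bounded (hωsum.mul_right C) fun i => ?_
  rw [norm_smul, norm_ofReal, abs_of_nonneg (hω i)]
  exact mul_le_mul_of_nonneg_left (ha i) (hω i)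

variable [NormedAddCommGroup E] [InnerProductSpace 𝕜 E] {ω : ι → ℝ} {a : ι → E} {m : E}

theorem hasSum_mul_re_inner_add (hωsum : HasSum ω 1) (hm : HasSum (fun i => (ω i : 𝕜) • a i) m)
    (v : E) (c : ℝ) :
    HasSum (fun i => ω i * (re (inner 𝕜 (a i) v) + c)) (re (inner 𝕜 m v) + c) := by
  have inner_sum : HasSum (fun i => ω i * re (inner 𝕜 (a i) v)) (re (inner 𝕜 m v)) := by
    simp only [inner_re_symm (𝕜 := 𝕜) _ v]
    simpa only [innerSL_apply_apply, inner_smul_right, re_ofReal_mul] using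
      hasSum_re 𝕜 (hm.mapL (innerSL 𝕜 v))
  simpa only [mul_add, one_mul] using inner_sum.add (hωsum.mul_right c)

/-- The condition on the `a i` says that they lie in the closed ball with diameter `[0, d]`. -/
theorem norm_sq_le_re_inner_of_hasSum (hω : ∀ i, 0 ≤ ω i) (hωsum : HasSum ω 1)
    (hm : HasSum (fun i => (ω i : 𝕜) • a i) m) {d : E}
    (ha : ∀ i, ‖a i‖ ^ 2 ≤ re (inner 𝕜 (a i) d)) : ‖m‖ ^ 2 ≤ re (inner 𝕜 m d) := by
  -- `‖a i‖²` is bounded below by the tangent at `m`, which is affine in `a i`.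
  have tangent_le (i : ι) : 0 ≤ re (inner 𝕜 (a i) (d - (2 : 𝕜) • m)) + ‖m‖ ^ 2 := by
    rw [inner_sub_right, map_sub, two_smul, inner_add_right, map_add]
    linarith [norm_sub_sq (𝕜 := 𝕜) (a i) m, sq_nonneg ‖a i - m‖, ha i]
  have sum_nonneg := (hasSum_mul_re_inner_add hωsum hm (d - (2 : 𝕜) • m) (‖m‖ ^ 2)).nonneg
    fun i => mul_nonneg (hω i) (tangent_le i)
  rw [inner_sub_right, map_sub, two_smul, inner_add_right, map_add, inner_self_eq_norm_sq]
    at sum_nonneg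
  linarith

theorem eq_of_hasSum_smul_of_norm_le (hω : ∀ i, 0 < ω i) (hωsum : HasSum ω 1)
    (hm : HasSum (fun i => (ω i : 𝕜) • a i) m) (ha : ∀ i, ‖a i‖ ≤ ‖m‖) (i : ι) : a i = m := by
  have gap_nonneg (i : ι) : 0 ≤ re (inner 𝕜 (a i) (-m)) + ‖m‖ ^ 2 := by
    rw [inner_neg_right, map_neg]
    linarith [(re_inner_le_norm (𝕜 := 𝕜) (a i) m).trans
      (mul_le_mul_of_nonneg_right (ha i) (norm_nonneg m))]
  have gap_sum := hasSum_mul_re_inner_add hωsum hm (-m) (‖m‖ ^ 2)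
  rw [inner_neg_right, map_neg, inner_self_eq_norm_sq, neg_add_cancel,
    hasSum_zero_iff_of_nonneg fun i => mul_nonneg (hω i).le (gap_nonneg i)] at gap_sum
  have gap_eq_zero := (mul_eq_zero.1 (congrFun gap_sum i)).resolve_left (hω i).ne'
  rw [inner_neg_right, map_neg, neg_add_eq_zero] at gap_eq_zero
  exact eq_of_norm_le_re_inner_eq_norm_sq (ha i) gap_eq_zero

end WeightedSums

section FirmlyNonexpansive

variable {E ι : Type*} (𝕜 : Type*) [RCLike 𝕜] [NormedAddCommGroup E] [InnerProductSpace 𝕜 E]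

/-- Firmly nonexpansive maps of an inner product space: the class of maps, containing the orthogonal
projections, whose iterates are studied here. The defining inequality is equivalent to
`‖f x - f y‖² + ‖(x - f x) - (y - f y)‖² ≤ ‖x - y‖²`; the inner product form passes to convex
combinations more directly. -/
def IsFirmlyNonexpansive (f : E → E) : Prop :=
  ∀ x y, ‖f x - f y‖ ^ 2 ≤ re (inner 𝕜 (f x - f y) (x - y))

theorem isFirmlyNonexpansive_starProjection (K : Submodule 𝕜 E) [K.HasOrthogonalProjection] :
    IsFirmlyNonexpansive 𝕜 K.starProjection := fun x y => by
  have inner_eq_zero :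
      inner 𝕜 ((x - y) - K.starProjection (x - y)) (K.starProjection (x - y)) = 0 :=
    K.starProjection_inner_eq_zero _ _ (K.starProjection_apply_mem _)
  rw [inner_sub_left, sub_eq_zero] at inner_eq_zero
  rw [← map_sub, inner_re_symm, inner_eq_zero, inner_self_eq_norm_sq]

variable {𝕜}

theorem isFirmlyNonexpansive_of_hasSum {ω : ι → ℝ} (hω : ∀ i, 0 ≤ ω i) (hωsum : HasSum ω 1)
    {f : ι → E → E} {g : E → E} (hf : ∀ i, IsFirmlyNonexpansive 𝕜 (f i))
    (hg : ∀ x, HasSum (fun i => (ω i : 𝕜) • f i x) (g x)) : IsFirmlyNonexpansive 𝕜 g := fun x y =>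
  norm_sq_le_re_inner_of_hasSum hω hωsum
    (by simpa only [smul_sub] using (hg x).sub (hg y)) fun i => hf i x y

namespace IsFirmlyNonexpansive

variable {f : E → E}

theorem lipschitzWith (hf : IsFirmlyNonexpansive 𝕜 f) : LipschitzWith 1 f := by
  refine .of_dist_le_mul fun x y => ?_
  rw [NNReal.coe_one, one_mul, dist_eq_norm, dist_eq_norm]
  have norm_sq_le := (hf x y).trans (re_inner_le_norm _ _)
  by_contra! norm_lt
  nlinarith [norm_nonneg (x - y)]

theorem opNorm_le_one {T : E →L[𝕜] E} (hT : IsFirmlyNonexpansive 𝕜 T) : ‖T‖ ≤ 1 :=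
  T.opNorm_le_of_lipschitz hT.lipschitzWith

theorem norm_sub_apply_sq_le (hf : IsFirmlyNonexpansive 𝕜 f) {z : E} (hz : IsFixedPt f z) (x : E) :
    ‖x - f x‖ ^ 2 ≤ ‖x - z‖ ^ 2 - ‖f x - z‖ ^ 2 := by
  have inner_ge := hf x z
  have expand := norm_sub_sq (𝕜 := 𝕜) (f x - z) (x - z)
  rw [sub_sub_sub_cancel_right, norm_sub_rev] at expand
  rw [hz.eq] at inner_ge
  linarith

theorem tendsto_iterate_sub_iterate_succ (hf : IsFirmlyNonexpansive 𝕜 f) {z : E}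
    (hz : IsFixedPt f z) (x : E) :
    Tendsto (fun k => f^[k] x - f^[k + 1] x) atTop (𝓝 0) := by
  have sum_le (n : ℕ) : ∑ k ∈ Finset.range n, ‖f^[k] x - f^[k + 1] x‖ ^ 2 ≤ ‖x - z‖ ^ 2 :=
    calc
      _ ≤ ∑ k ∈ Finset.range n, (‖f^[k] x - z‖ ^ 2 - ‖f^[k + 1] x - z‖ ^ 2) := by
        gcongr with k
        rw [iterate_succ_apply']
        exact hf.norm_sub_apply_sq_le hz _
      _ = ‖x - z‖ ^ 2 - ‖f^[n] x - z‖ ^ 2 := Finset.sum_range_sub' _ n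
      _ ≤ ‖x - z‖ ^ 2 := sub_le_self _ (sq_nonneg _)
  have sq_tendsto := (summable_of_sum_range_le (fun _ => sq_nonneg _) sum_le).tendsto_atTop_zero
  exact tendsto_zero_iff_norm_tendsto_zero.2 (by simpa using sq_tendsto.sqrt)

end IsFirmlyNonexpansive

end FirmlyNonexpansive

section Iterates

variable {𝕜 E ι : Type*} [RCLike 𝕜] [NormedAddCommGroup E] [InnerProductSpace 𝕜 E]

theorem isFixedPt_iff_forall_of_hasSum {ω : ι → ℝ} (hω : ∀ i, 0 < ω i) (hωsum : HasSum ω 1)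
    {f : ι → E → E} {g : E → E} {x : E} (hf : ∀ i, ‖f i x‖ ≤ ‖x‖)
    (hg : HasSum (fun i => (ω i : 𝕜) • f i x) (g x)) :
    IsFixedPt g x ↔ ∀ i, IsFixedPt (f i) x := by
  refine ⟨fun hx => eq_of_hasSum_smul_of_norm_le hω hωsum (hx ▸ hg) hf, fun hx => ?_⟩
  have sum_smul : HasSum (fun i => (ω i : 𝕜) • f i x) x := by
    simpa only [(hx _).eq, ofReal_one, one_smul] using
      ((hasSum_ofReal 𝕜).2 hωsum).smul_const x
  exact hg.unique sum_smul

theorem isFixedPt_of_mem_orthogonal_range_one_sub {T : E →L[𝕜] E} (hT : ‖T‖ ≤ 1) {v : E}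
    (hv : v ∈ (1 - T).rangeᗮ) : IsFixedPt T v := by
  have inner_eq_zero : inner 𝕜 (v - T v) v = 0 := hv _ ⟨v, rfl⟩
  rw [inner_sub_left, sub_eq_zero] at inner_eq_zero
  exact eq_of_norm_le_re_inner_eq_norm_sq (𝕜 := 𝕜) (by simpa using T.le_of_opNorm_le hT v)
    (by rw [← inner_eq_zero, inner_self_eq_norm_sq])

theorem isClosed_setOf_tendsto_iterate {X : Type*} [PseudoMetricSpace X] {f : X → X}
    (hf : LipschitzWith 1 f) (c : X) : IsClosed {x | Tendsto (fun k => f^[k] x) atTop (𝓝 c)} := by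
  have uniform (k : ℕ) : LipschitzWith 1 f^[k] := by simpa only [one_pow] using hf.iterate k
  exact (LipschitzWith.uniformEquicontinuous _ 1 uniform).equicontinuous.isClosed_setOfPred_tendsto
    continuous_const

variable [CompleteSpace E]

theorem tendsto_iterate_starProjection {T : E →L[𝕜] E} (hT : ‖T‖ ≤ 1)
    (hregular : ∀ x, Tendsto (fun k => T^[k] x - T^[k + 1] x) atTop (𝓝 0))
    {K : Submodule 𝕜 E} [K.HasOrthogonalProjection] (hK : ∀ x, x ∈ K ↔ IsFixedPt T x) (x : E) :
    Tendsto (fun k => T^[k] x) atTop (𝓝 (K.starProjection x)) := by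
  have iterate_sub (k : ℕ) (x y : E) : T^[k] (x - y) = T^[k] x - T^[k] y :=
    iterate_map_sub (T : E →+ E) k x y
  have tendsto_range : ∀ y ∈ (1 - T).range, Tendsto (fun k => T^[k] y) atTop (𝓝 0) := by
    rintro _ ⟨y, rfl⟩
    exact (hregular y).congr fun k => (iterate_sub k y (T y)).symm
  have orthogonal_le : Kᗮ ≤ (1 - T).range.topologicalClosure := by
    rw [← Submodule.orthogonal_orthogonal_eq_closure]
    exact Submodule.orthogonal_le fun v hv =>
      (hK v).2 (isFixedPt_of_mem_orthogonal_range_one_sub hT hv)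
  have tendsto_orthogonal : Tendsto (fun k => T^[k] (x - K.starProjection x)) atTop (𝓝 0) :=
    closure_minimal tendsto_range (isClosed_setOf_tendsto_iterate (T.lipschitz.weaken hT) 0)
      (orthogonal_le (K.sub_starProjection_mem_orthogonal x))
  have fixed (k : ℕ) : T^[k] (K.starProjection x) = K.starProjection x :=
    ((hK _).1 (K.starProjection_apply_mem x)).iterate k
  exact tendsto_sub_nhds_zero_iff.1 (by simpa only [iterate_sub, fixed] using tendsto_orthogonal)

theorem IsFirmlyNonexpansive.tendsto_iterate_tsum_smul {ω : ι → ℝ} (hω : ∀ i, 0 < ω i)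
    (hωsum : HasSum ω 1) {A : ι → E →L[𝕜] E} (hA : ∀ i, IsFirmlyNonexpansive 𝕜 (A i))
    {K : Submodule 𝕜 E} [K.HasOrthogonalProjection]
    (hK : ∀ x, x ∈ K ↔ ∀ i, IsFixedPt (A i) x) (x : E) :
    Tendsto (fun k => (fun z => ∑' i, (ω i : 𝕜) • A i z)^[k] x) atTop
      (𝓝 (K.starProjection x)) := by
  have summable : Summable fun i => (ω i : 𝕜) • A i :=
    summable_ofReal_smul_of_norm_le (fun i => (hω i).le) hωsum.summable fun i =>
      (hA i).opNorm_le_one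
  have hasSum_apply (z : E) : HasSum (fun i => (ω i : 𝕜) • A i z) ((∑' i, (ω i : 𝕜) • A i) z) :=
    summable.hasSum.mapL (ContinuousLinearMap.apply 𝕜 E z)
  have firm := isFirmlyNonexpansive_of_hasSum (fun i => (hω i).le) hωsum hA hasSum_apply
  simp only [(hasSum_apply _).tsum_eq]
  have mem_iff (z : E) : z ∈ K ↔ IsFixedPt (∑' i, (ω i : 𝕜) • A i : E →L[𝕜] E) z :=
    (hK z).trans (isFixedPt_iff_forall_of_hasSum hω hωsum
      (fun i => by simpa using (A i).le_of_opNorm_le (hA i).opNorm_le_one z) (hasSum_apply z)).symm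
  exact tendsto_iterate_starProjection firm.opNorm_le_one
    (firm.tendsto_iterate_sub_iterate_succ (map_zero _)) mem_iff x

end Iterates

theorem stmt_2_general {𝕜 H ι : Type*} [RCLike 𝕜] [NormedAddCommGroup H] [InnerProductSpace 𝕜 H]
    [CompleteSpace H] {ω : ι → ℝ} (hω : ∀ i, 0 < ω i) (hωsum : HasSum ω 1)
    (M : ι → Submodule 𝕜 H) [∀ i, (M i).HasOrthogonalProjection]
    [(⨅ i, M i).HasOrthogonalProjection] (x : H) :
    Tendsto (fun k : ℕ => (fun z => ∑' i, (ω i : 𝕜) • (M i).starProjection z)^[k] x) atTop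
      (𝓝 ((⨅ i, M i).starProjection x)) :=
  IsFirmlyNonexpansive.tendsto_iterate_tsum_smul hω hωsum
    (fun i => isFirmlyNonexpansive_starProjection 𝕜 (M i))
    (fun _ => (Submodule.mem_iInf M).trans
      (forall_congr' fun _ => Submodule.starProjection_eq_self_iff.symm)) x

/-- For every `x ∈ H`, the iterates of the simultaneous projection
method converge in norm to `P_M x`: `‖T_ω^k x − P_M x‖ → 0` as `k → ∞`. -/
theorem stmt_2 {H : Type*} [NormedAddCommGroup H] [InnerProductSpace ℝ H] [CompleteSpace H]
    {ι : Type*} [Countable ι] [Nonempty ι]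
    (ω : ι → ℝ) (hω : ∀ i, 0 < ω i) (hωsum : HasSum ω 1)
    (M : ι → Submodule ℝ H) [∀ i, CompleteSpace (M i)]
    [CompleteSpace ↥(⨅ i, M i : Submodule ℝ H)]
    (hMnt : ∀ i, M i ≠ ⊥) (x : H) :
    Filter.Tendsto
      (fun k : ℕ =>
        ‖(fun z : H => ∑' i, ω i • ((Submodule.orthogonalProjectionOnto (M i) z : H)))^[k] x -
          (Submodule.orthogonalProjectionOnto (⨅ i, M i : Submodule ℝ H) x : H)‖)
      Filter.atTop (nhds 0) :=
  tendsto_iff_norm_sub_tendsto_zero.1 (stmt_2_general hω hωsum M x)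
end

section
/- For every integer k ≥ 1, the operator norm in B(H) satisfies ‖T_ω^k − P_M‖ = c_ω^{2k}. In particular ‖T_ω^k − P_M‖ = ‖T_ω − P_M‖^k for all k ≥ 1, and c_ω ≤ 1. -/
open RealInnerProductSpace

/-- The cosine of the Friedrichs angle between the product subspace `∏ᵢ Mᵢ` and the
diagonal in the `ω`-weighted `ℓ²` product space, expressed intrinsically in `H`. -/
noncomputable def friedrichsCos {H : Type*} [NormedAddCommGroup H] [InnerProductSpace ℝ H]
    {ι : Type*} (ω : ι → ℝ) (M : ι → Submodule ℝ H) : ℝ :=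
  sSup { r : ℝ | ∃ (x : ι → H) (y : H),
    (∀ i, x i ∈ M i ⊓ (⨅ j, M j)ᗮ) ∧
    (Summable fun i => ω i * ‖x i‖ ^ 2) ∧ (∑' i, ω i * ‖x i‖ ^ 2) ≤ 1 ∧
    y ∈ (⨅ j, M j)ᗮ ∧ ‖y‖ ≤ 1 ∧
    r = ∑' i, ω i * ⟪x i, y⟫ }

/-!
Write `N = ⨅ i, M i`, `c = friedrichsCos ω M`, `Qᵢ` for the projection onto `M i` and `P` for the
projection onto `N`. `T` is symmetric and fixes `N`, so `T ^ k - P = (T - P) ^ k`. The powers of a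
symmetric operator `S` satisfy `‖S ^ k‖ = ‖S‖ ^ k`, since symmetry makes `n ↦ ‖S ^ n‖` log-convex.
So only `‖T - P‖ = c ^ 2` remains. The quadratic form
`⟪T y, y⟫ = ∑ ω i * ‖Qᵢ y‖ ^ 2` links the two sides. For `xᵢ ∈ M i`, Cauchy–Schwarz bounds
`∑ ω i * ⟪xᵢ, y⟫ = ∑ ω i * ⟪xᵢ, Qᵢ y⟫` by `√(∑ ω i * ‖xᵢ‖ ^ 2) * √⟪T y, y⟫`, whence
`c ^ 2 ≤ ‖T - P‖`. Conversely, for `y ∈ Nᗮ` the family `Qᵢ y` paired with `T y` gives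
`‖T y‖ ^ 2 ≤ c * √⟪T y, y⟫ * ‖T y‖`, and with `⟪T y, y⟫ ≤ ‖T y‖ * ‖y‖` this is
`‖T y‖ ≤ c ^ 2 * ‖y‖`.
-/

theorem sub_pow_eq_pow_sub_of_isIdempotentElem {R : Type*} [Ring R] {a p : R}
    (hp : IsIdempotentElem p) (hap : a * p = p) (hpa : p * a = p) {k : ℕ} (hk : 1 ≤ k) :
    (a - p) ^ k = a ^ k - p := by
  induction k, hk using Nat.le_induction with
  | base => simp only [pow_one]
  | succ n hn ih =>
    have hpan : p * a ^ n = p := by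
      clear ih hn
      induction n with
      | zero => rw [pow_zero, mul_one]
      | succ m ihm => rw [pow_succ', ← mul_assoc, hpa, ihm]
    rw [pow_succ', ih, sub_mul, mul_sub, mul_sub, hpan, hap, hp.eq, pow_succ']
    abel

section InnerProduct

variable {𝕜 E : Type*} [RCLike 𝕜] [NormedAddCommGroup E] [InnerProductSpace 𝕜 E]

theorem apply_mem_orthogonal_of_isSymmetric {S : E →ₗ[𝕜] E} (hS : S.IsSymmetric)
    {U : Submodule 𝕜 E} (hU : ∀ u ∈ U, S u ∈ U) {y : E} (hy : y ∈ Uᗮ) : S y ∈ Uᗮ := by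
  rw [Submodule.mem_orthogonal] at hy ⊢
  intro u hu
  rw [← hS u y]
  exact hy _ (hU u hu)

theorem starProjection_mem_orthogonal_of_le {U V : Submodule 𝕜 E} [V.HasOrthogonalProjection]
    (hUV : U ≤ V) {y : E} (hy : y ∈ Uᗮ) : V.starProjection y ∈ Uᗮ :=
  apply_mem_orthogonal_of_isSymmetric V.starProjection_isSymmetric
    (fun u hu => by
      simpa only [ContinuousLinearMap.coe_coe,
        Submodule.starProjection_eq_self_iff.mpr (hUV hu)] using hu) hy

theorem re_inner_apply_self_le_norm_sub_starProjection (S : E →L[𝕜] E) {U : Submodule 𝕜 E}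
    [U.HasOrthogonalProjection] {y : E} (hy : y ∈ Uᗮ) :
    RCLike.re (inner 𝕜 (S y) y) ≤ ‖S - U.starProjection‖ * ‖y‖ ^ 2 := by
  have happly : (S - U.starProjection) y = S y := by
    rw [sub_apply, U.starProjection_apply_eq_zero_iff.mpr hy, sub_zero]
  calc RCLike.re (inner 𝕜 (S y) y) ≤ ‖(S - U.starProjection) y‖ * ‖y‖ :=
        happly ▸ re_inner_le_norm _ _
    _ ≤ ‖S - U.starProjection‖ * ‖y‖ * ‖y‖ := by
        gcongr
        exact ContinuousLinearMap.le_opNorm _ _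
    _ = ‖S - U.starProjection‖ * ‖y‖ ^ 2 := by ring

theorem norm_pow_succ_sq_le_of_isSymmetric {S : E →L[𝕜] E} (hS : (S : E →ₗ[𝕜] E).IsSymmetric)
    (n : ℕ) : ‖S ^ (n + 1)‖ ^ 2 ≤ ‖S ^ n‖ * ‖S ^ (n + 2)‖ := by
  rw [← Real.le_sqrt (norm_nonneg _) (by positivity)]
  refine ContinuousLinearMap.opNorm_le_bound _ (Real.sqrt_nonneg _) fun x => ?_
  have shift : inner 𝕜 ((S ^ (n + 1)) x) ((S ^ (n + 1)) x)
      = inner 𝕜 ((S ^ n) x) ((S ^ (n + 2)) x) := by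
    rw [pow_succ' S (n + 1), pow_succ' S n]
    exact hS _ _
  refine (sq_le_sq₀ (norm_nonneg _) (by positivity)).mp ?_
  calc ‖(S ^ (n + 1)) x‖ ^ 2
      = RCLike.re (inner 𝕜 ((S ^ n) x) ((S ^ (n + 2)) x)) := by
        rw [← shift, inner_self_eq_norm_sq]
    _ ≤ ‖(S ^ n) x‖ * ‖(S ^ (n + 2)) x‖ := re_inner_le_norm _ _
    _ ≤ (‖S ^ n‖ * ‖x‖) * (‖S ^ (n + 2)‖ * ‖x‖) := by
        gcongr <;> exact ContinuousLinearMap.le_opNorm _ _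
    _ = (√(‖S ^ n‖ * ‖S ^ (n + 2)‖) * ‖x‖) ^ 2 := by
        rw [mul_pow, Real.sq_sqrt (by positivity)]
        ring

theorem norm_pow_of_isSymmetric {S : E →L[𝕜] E} (hS : (S : E →ₗ[𝕜] E).IsSymmetric)
    {k : ℕ} (hk : 1 ≤ k) : ‖S ^ k‖ = ‖S‖ ^ k := by
  refine le_antisymm (norm_pow_le' S hk) ?_
  rcases (norm_nonneg S).eq_or_lt with hzero | hpos
  · rw [← hzero, zero_pow (Nat.one_le_iff_ne_zero.mp hk)]
    exact norm_nonneg _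
  induction k, hk using Nat.le_induction with
  | base => simp only [pow_one, le_refl]
  | succ n hn ih =>
    obtain ⟨m, rfl⟩ := Nat.exists_eq_add_of_le' hn
    have hm : ‖S ^ m‖ ≤ ‖S‖ ^ m := by
      rcases m.eq_zero_or_pos with rfl | hm
      · exact ContinuousLinearMap.norm_id_le.trans_eq (pow_zero _).symm
      · exact norm_pow_le' S hm
    refine le_of_mul_le_mul_left ?_ (pow_pos hpos m)
    calc ‖S‖ ^ m * ‖S‖ ^ (m + 1 + 1) = (‖S‖ ^ (m + 1)) ^ 2 := by ring
      _ ≤ ‖S ^ (m + 1)‖ ^ 2 := by gcongr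
      _ ≤ ‖S ^ m‖ * ‖S ^ (m + 2)‖ := norm_pow_succ_sq_le_of_isSymmetric hS m
      _ ≤ ‖S‖ ^ m * ‖S ^ (m + 2)‖ := by gcongr

theorem norm_tsum_smul_inner_le {ι : Type*} {ω : ι → ℝ} (hω : ∀ i, 0 ≤ ω i) {x y : ι → E}
    (hx : Summable fun i => ω i * ‖x i‖ ^ 2) (hy : Summable fun i => ω i * ‖y i‖ ^ 2) :
    ‖∑' i, ω i • inner 𝕜 (x i) (y i)‖ ≤
      √(∑' i, ω i * ‖x i‖ ^ 2) * √(∑' i, ω i * ‖y i‖ ^ 2) := by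
  have sq_weighted (z : ι → E) :
      (fun i => (√(ω i) * ‖z i‖) ^ (2 : ℝ)) = fun i => ω i * ‖z i‖ ^ 2 := by
    funext i
    rw [Real.rpow_two, mul_pow, Real.sq_sqrt (hω i)]
  obtain ⟨hsum, hle⟩ := Real.summable_and_inner_le_Lp_mul_Lq_tsum_of_nonneg .two_two
    (f := fun i => √(ω i) * ‖x i‖) (g := fun i => √(ω i) * ‖y i‖)
    (fun i => by positivity) (fun i => by positivity)
    (by rwa [sq_weighted]) (by rwa [sq_weighted])
  rw [sq_weighted, sq_weighted, ← Real.sqrt_eq_rpow, ← Real.sqrt_eq_rpow] at hle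
  refine (tsum_of_norm_bounded hsum.hasSum fun i => ?_).trans hle
  calc ‖ω i • inner 𝕜 (x i) (y i)‖ = ω i * ‖inner 𝕜 (x i) (y i)‖ := by
        rw [norm_smul, Real.norm_of_nonneg (hω i)]
    _ ≤ ω i * (‖x i‖ * ‖y i‖) := mul_le_mul_of_nonneg_left (norm_inner_le_norm _ _) (hω i)
    _ = √(ω i) * ‖x i‖ * (√(ω i) * ‖y i‖) := by
        rw [mul_mul_mul_comm, Real.mul_self_sqrt (hω i)]

end InnerProduct

section FriedrichsCos

variable {H : Type*} [NormedAddCommGroup H] [InnerProductSpace ℝ H] {ι : Type*} {ω : ι → ℝ}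
  {M : ι → Submodule ℝ H}

theorem tsum_mul_inner_le_sqrt_mul_norm (hω : ∀ i, 0 ≤ ω i) (hωsum : HasSum ω 1) {x : ι → H}
    (hx : Summable fun i => ω i * ‖x i‖ ^ 2) (y : H) :
    ∑' i, ω i * ⟪x i, y⟫ ≤ √(∑' i, ω i * ‖x i‖ ^ 2) * ‖y‖ := by
  have hy : HasSum (fun i => ω i * ‖y‖ ^ 2) (‖y‖ ^ 2) := by
    simpa only [one_mul] using hωsum.mul_right (‖y‖ ^ 2)
  have cauchySchwarz := norm_tsum_smul_inner_le (𝕜 := ℝ) hω hx hy.summable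
  rw [hy.tsum_eq, Real.sqrt_sq (norm_nonneg y)] at cauchySchwarz
  exact (Real.le_norm_self _).trans cauchySchwarz

theorem friedrichsCos_le {b : ℝ}
    (hb : ∀ (x : ι → H) (y : H), (∀ i, x i ∈ M i ⊓ (⨅ j, M j)ᗮ) →
      (Summable fun i => ω i * ‖x i‖ ^ 2) → ∑' i, ω i * ‖x i‖ ^ 2 ≤ 1 →
      y ∈ (⨅ j, M j)ᗮ → ‖y‖ ≤ 1 → ∑' i, ω i * ⟪x i, y⟫ ≤ b) :
    friedrichsCos ω M ≤ b := by
  refine csSup_le ⟨0, fun _ => 0, 0, ?_⟩ ?_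
  · simp
  · rintro r ⟨x, y, hxM, hx, hx_le, hyM, hy, rfl⟩
    exact hb x y hxM hx hx_le hyM hy

theorem tsum_mul_inner_le_one (hω : ∀ i, 0 ≤ ω i) (hωsum : HasSum ω 1) {x : ι → H}
    (hx : Summable fun i => ω i * ‖x i‖ ^ 2) (hx_le : ∑' i, ω i * ‖x i‖ ^ 2 ≤ 1) {y : H}
    (hy : ‖y‖ ≤ 1) : ∑' i, ω i * ⟪x i, y⟫ ≤ 1 :=
  (tsum_mul_inner_le_sqrt_mul_norm hω hωsum hx y).trans
    (mul_le_one₀ (Real.sqrt_le_one.mpr hx_le) (norm_nonneg y) hy)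

theorem friedrichsCos_le_one (hω : ∀ i, 0 ≤ ω i) (hωsum : HasSum ω 1) :
    friedrichsCos ω M ≤ 1 :=
  friedrichsCos_le fun _ _ _ hx hx_le _ hy => tsum_mul_inner_le_one hω hωsum hx hx_le hy

theorem le_friedrichsCos (hω : ∀ i, 0 ≤ ω i) (hωsum : HasSum ω 1) {x : ι → H} {y : H}
    (hxM : ∀ i, x i ∈ M i ⊓ (⨅ j, M j)ᗮ) (hx : Summable fun i => ω i * ‖x i‖ ^ 2)
    (hx_le : ∑' i, ω i * ‖x i‖ ^ 2 ≤ 1) (hyM : y ∈ (⨅ j, M j)ᗮ) (hy : ‖y‖ ≤ 1) :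
    ∑' i, ω i * ⟪x i, y⟫ ≤ friedrichsCos ω M := by
  refine le_csSup ⟨1, ?_⟩ ⟨x, y, hxM, hx, hx_le, hyM, hy, rfl⟩
  rintro r ⟨x, y, -, hx, hx_le, -, hy, rfl⟩
  exact tsum_mul_inner_le_one hω hωsum hx hx_le hy

theorem friedrichsCos_nonneg (hω : ∀ i, 0 ≤ ω i) (hωsum : HasSum ω 1) :
    0 ≤ friedrichsCos ω M := by
  simpa using le_friedrichsCos (M := M) (x := 0) (y := 0) hω hωsum (by simp) (by simp) (by simp)
    (by simp) (by simp)

theorem tsum_mul_inner_le_friedrichsCos_mul (hω : ∀ i, 0 ≤ ω i) (hωsum : HasSum ω 1)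
    {x : ι → H} {y : H} (hxM : ∀ i, x i ∈ M i ⊓ (⨅ j, M j)ᗮ)
    (hx : Summable fun i => ω i * ‖x i‖ ^ 2) (hyM : y ∈ (⨅ j, M j)ᗮ) :
    ∑' i, ω i * ⟪x i, y⟫ ≤ friedrichsCos ω M * (√(∑' i, ω i * ‖x i‖ ^ 2) * ‖y‖) := by
  set s := √(∑' i, ω i * ‖x i‖ ^ 2)
  have hs_sq : ∑' i, ω i * ‖x i‖ ^ 2 = s ^ 2 :=
    (Real.sq_sqrt (tsum_nonneg fun i => mul_nonneg (hω i) (sq_nonneg _))).symm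
  have hprod_nonneg : 0 ≤ s * ‖y‖ := by positivity
  rcases hprod_nonneg.eq_or_lt with hzero | hpos
  · rw [← hzero, mul_zero, hzero]
    exact tsum_mul_inner_le_sqrt_mul_norm hω hωsum hx y
  have hscaled (i : ι) : ω i * ‖s⁻¹ • x i‖ ^ 2 = s⁻¹ ^ 2 * (ω i * ‖x i‖ ^ 2) := by
    rw [norm_smul, mul_pow, Real.norm_eq_abs, sq_abs]
    ring
  have hnormalized := le_friedrichsCos (M := M) hω hωsum (x := fun i => s⁻¹ • x i)
    (y := ‖y‖⁻¹ • y) (fun i => Submodule.smul_mem _ _ (hxM i))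
    (by simpa only [hscaled] using hx.mul_left _)
    (by
      simp only [hscaled]
      rw [tsum_mul_left, hs_sq, ← mul_pow]
      exact pow_le_one₀ (by positivity) inv_mul_le_one)
    (Submodule.smul_mem _ _ hyM)
    (by
      rw [norm_smul, norm_inv, norm_norm]
      exact inv_mul_le_one)
  have hfactor : ∑' i, ω i * ⟪s⁻¹ • x i, ‖y‖⁻¹ • y⟫
      = (s * ‖y‖)⁻¹ * ∑' i, ω i * ⟪x i, y⟫ := by
    rw [← tsum_mul_left]
    refine tsum_congr fun i => ?_
    rw [real_inner_smul_left, real_inner_smul_right, mul_inv]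
    ring
  rwa [hfactor, inv_mul_le_iff₀ hpos, mul_comm] at hnormalized

end FriedrichsCos

/-- `T` is the simultaneous projection operator `T_ω` of the family `M` with weights `ω`. The series
is required to converge pointwise, which makes the notion meaningful in incomplete spaces. -/
def IsSimultaneousProjection {H : Type*} [NormedAddCommGroup H] [InnerProductSpace ℝ H]
    {ι : Type*} (ω : ι → ℝ) (M : ι → Submodule ℝ H) [∀ i, (M i).HasOrthogonalProjection]
    (T : H →L[ℝ] H) : Prop :=
  ∀ z, HasSum (fun i => ω i • (M i).starProjection z) (T z)

namespace IsSimultaneousProjection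

variable {H : Type*} [NormedAddCommGroup H] [InnerProductSpace ℝ H] {ι : Type*} {ω : ι → ℝ}
  {M : ι → Submodule ℝ H} [∀ i, (M i).HasOrthogonalProjection] {T : H →L[ℝ] H}

theorem of_apply_eq_tsum [CompleteSpace H] (hω : ∀ i, 0 ≤ ω i) (hωs : Summable ω)
    (hT : ∀ z, T z = ∑' i, ω i • (M i).starProjection z) : IsSimultaneousProjection ω M T := by
  intro z
  rw [hT z]
  refine (Summable.of_norm_bounded (hωs.mul_right ‖z‖) fun i => ?_).hasSum
  rw [norm_smul, Real.norm_of_nonneg (hω i)]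
  exact mul_le_mul_of_nonneg_left ((M i).norm_starProjection_apply_le z) (hω i)

theorem hasSum_inner (hT : IsSimultaneousProjection ω M T) (x y : H) :
    HasSum (fun i => ω i * ⟪(M i).starProjection x, y⟫) ⟪T x, y⟫ := by
  simpa only [innerSL_apply_apply, real_inner_smul_right, real_inner_comm]
    using (innerSL ℝ y).hasSum (hT x)

theorem hasSum_norm_sq (hT : IsSimultaneousProjection ω M T) (y : H) :
    HasSum (fun i => ω i * ‖(M i).starProjection y‖ ^ 2) ⟪T y, y⟫ := by
  have hnorm (i : ι) : ⟪(M i).starProjection y, y⟫ = ‖(M i).starProjection y‖ ^ 2 :=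
    (M i).re_inner_starProjection_eq_normSq y
  simpa only [hnorm] using hT.hasSum_inner y y

theorem isSymmetric (hT : IsSimultaneousProjection ω M T) : (T : H →ₗ[ℝ] H).IsSymmetric := by
  intro x y
  refine (hT.hasSum_inner x y).unique ?_
  rw [real_inner_comm]
  refine (hT.hasSum_inner y x).congr_fun fun i => ?_
  rw [Submodule.inner_starProjection_left_eq_right, real_inner_comm]

theorem apply_of_mem (hT : IsSimultaneousProjection ω M T) (hωsum : HasSum ω 1) {z : H}
    (hz : z ∈ ⨅ i, M i) : T z = z := by
  have hfix (i : ι) : (M i).starProjection z = z :=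
    Submodule.starProjection_eq_self_iff.mpr (iInf_le M i hz)
  have hconst : HasSum (fun i => ω i • z) (T z) := by simpa only [hfix] using hT z
  exact hconst.unique (by simpa only [one_smul] using hωsum.smul_const z)

theorem apply_mem_orthogonal (hT : IsSimultaneousProjection ω M T) (hωsum : HasSum ω 1) {y : H}
    (hy : y ∈ (⨅ i, M i)ᗮ) : T y ∈ (⨅ i, M i)ᗮ :=
  apply_mem_orthogonal_of_isSymmetric hT.isSymmetric
    (fun _ hu => (hT.apply_of_mem hωsum hu).symm ▸ hu) hy

theorem tsum_mul_inner_le (hT : IsSimultaneousProjection ω M T) (hω : ∀ i, 0 ≤ ω i) {x : ι → H}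
    (hxM : ∀ i, x i ∈ M i) (hx : Summable fun i => ω i * ‖x i‖ ^ 2) (y : H) :
    ∑' i, ω i * ⟪x i, y⟫ ≤ √(∑' i, ω i * ‖x i‖ ^ 2) * √⟪T y, y⟫ := by
  have hproj (i : ι) : ⟪x i, (M i).starProjection y⟫ = ⟪x i, y⟫ := by
    rw [← Submodule.inner_starProjection_left_eq_right,
      Submodule.starProjection_eq_self_iff.mpr (hxM i)]
  have cauchySchwarz :=
    norm_tsum_smul_inner_le (𝕜 := ℝ) hω hx (hT.hasSum_norm_sq y).summable
  simp only [hproj, (hT.hasSum_norm_sq y).tsum_eq] at cauchySchwarz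
  exact (Real.le_norm_self _).trans cauchySchwarz

theorem norm_apply_le (hT : IsSimultaneousProjection ω M T) (hω : ∀ i, 0 ≤ ω i)
    (hωsum : HasSum ω 1) {y : H} (hy : y ∈ (⨅ i, M i)ᗮ) :
    ‖T y‖ ≤ friedrichsCos ω M ^ 2 * ‖y‖ := by
  have hform := hT.hasSum_norm_sq y
  have hform_nonneg : 0 ≤ ⟪T y, y⟫ :=
    hform.nonneg fun i => mul_nonneg (hω i) (sq_nonneg _)
  rcases (norm_nonneg (T y)).eq_or_lt with hzero | hpos
  · rw [← hzero]
    positivity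
  have hpair : ‖T y‖ * ‖T y‖ ≤ friedrichsCos ω M * √⟪T y, y⟫ * ‖T y‖ := by
    have := tsum_mul_inner_le_friedrichsCos_mul (M := M) hω hωsum
      (fun i => ⟨(M i).starProjection_apply_mem y,
        starProjection_mem_orthogonal_of_le (iInf_le M i) hy⟩)
      hform.summable (hT.apply_mem_orthogonal hωsum hy)
    rwa [(hT.hasSum_inner y (T y)).tsum_eq, hform.tsum_eq, real_inner_self_eq_norm_mul_norm,
      ← mul_assoc] at this
  have hroot : ‖T y‖ ≤ friedrichsCos ω M * √⟪T y, y⟫ := le_of_mul_le_mul_right hpair hpos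
  refine le_of_mul_le_mul_right ?_ hpos
  calc ‖T y‖ * ‖T y‖
      ≤ friedrichsCos ω M * √⟪T y, y⟫ * (friedrichsCos ω M * √⟪T y, y⟫) :=
        mul_self_le_mul_self hpos.le hroot
    _ = friedrichsCos ω M ^ 2 * ⟪T y, y⟫ := by
        rw [mul_mul_mul_comm, Real.mul_self_sqrt hform_nonneg, sq]
    _ ≤ friedrichsCos ω M ^ 2 * (‖T y‖ * ‖y‖) := by
        gcongr
        exact real_inner_le_norm _ _
    _ = friedrichsCos ω M ^ 2 * ‖y‖ * ‖T y‖ := by ring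

variable [(⨅ i, M i).HasOrthogonalProjection]

theorem mul_starProjection_iInf (hT : IsSimultaneousProjection ω M T) (hωsum : HasSum ω 1) :
    T * (⨅ i, M i).starProjection = (⨅ i, M i).starProjection := by
  ext z
  exact hT.apply_of_mem hωsum (Submodule.starProjection_apply_mem _ z)

theorem starProjection_iInf_mul (hT : IsSimultaneousProjection ω M T) (hωsum : HasSum ω 1) :
    (⨅ i, M i).starProjection * T = (⨅ i, M i).starProjection := by
  ext z
  refine ext_inner_right ℝ fun w => ?_
  calc ⟪(⨅ i, M i).starProjection (T z), w⟫
      = ⟪z, T ((⨅ i, M i).starProjection w)⟫ := by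
        rw [Submodule.inner_starProjection_left_eq_right]
        exact hT.isSymmetric _ _
    _ = ⟪(⨅ i, M i).starProjection z, w⟫ := by
        rw [hT.apply_of_mem hωsum (Submodule.starProjection_apply_mem _ w),
          Submodule.inner_starProjection_left_eq_right]

theorem norm_pow_sub (hT : IsSimultaneousProjection ω M T) (hωsum : HasSum ω 1) {k : ℕ}
    (hk : 1 ≤ k) :
    ‖T ^ k - (⨅ i, M i).starProjection‖ = ‖T - (⨅ i, M i).starProjection‖ ^ k := by
  rw [← sub_pow_eq_pow_sub_of_isIdempotentElem (Submodule.isIdempotentElem_starProjection _)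
    (hT.mul_starProjection_iInf hωsum) (hT.starProjection_iInf_mul hωsum) hk]
  exact norm_pow_of_isSymmetric
    (hT.isSymmetric.sub (Submodule.starProjection_isSymmetric (⨅ i, M i))) hk

theorem norm_sub_le (hT : IsSimultaneousProjection ω M T) (hω : ∀ i, 0 ≤ ω i)
    (hωsum : HasSum ω 1) : ‖T - (⨅ i, M i).starProjection‖ ≤ friedrichsCos ω M ^ 2 := by
  refine ContinuousLinearMap.opNorm_le_bound _ (sq_nonneg _) fun z => ?_
  have happly : (T - (⨅ i, M i).starProjection) z = T ((⨅ i, M i)ᗮ.starProjection z) := by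
    rw [Submodule.starProjection_orthogonal_val, map_sub,
      hT.apply_of_mem hωsum (Submodule.starProjection_apply_mem _ z)]
    rfl
  calc ‖(T - (⨅ i, M i).starProjection) z‖
      ≤ friedrichsCos ω M ^ 2 * ‖(⨅ i, M i)ᗮ.starProjection z‖ :=
        happly ▸ hT.norm_apply_le hω hωsum (Submodule.starProjection_apply_mem _ z)
    _ ≤ friedrichsCos ω M ^ 2 * ‖z‖ := by
        gcongr
        exact Submodule.norm_starProjection_apply_le _ z

theorem sq_friedrichsCos_le_norm_sub (hT : IsSimultaneousProjection ω M T) (hω : ∀ i, 0 ≤ ω i)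
    (hωsum : HasSum ω 1) : friedrichsCos ω M ^ 2 ≤ ‖T - (⨅ i, M i).starProjection‖ := by
  rw [← Real.le_sqrt (friedrichsCos_nonneg hω hωsum) (norm_nonneg _)]
  refine friedrichsCos_le fun x y hxM hx hx_le hyM hy => ?_
  have hform : ⟪T y, y⟫ ≤ ‖T - (⨅ i, M i).starProjection‖ :=
    (re_inner_apply_self_le_norm_sub_starProjection T hyM).trans
      (mul_le_of_le_one_right (norm_nonneg _) (pow_le_one₀ (norm_nonneg y) hy))
  calc ∑' i, ω i * ⟪x i, y⟫ ≤ √(∑' i, ω i * ‖x i‖ ^ 2) * √⟪T y, y⟫ :=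
        hT.tsum_mul_inner_le hω (fun i => (hxM i).1) hx y
    _ ≤ 1 * √‖T - (⨅ i, M i).starProjection‖ := by
        gcongr
        exact Real.sqrt_le_one.mpr hx_le
    _ = √‖T - (⨅ i, M i).starProjection‖ := one_mul _

theorem norm_sub_eq_sq_friedrichsCos (hT : IsSimultaneousProjection ω M T) (hω : ∀ i, 0 ≤ ω i)
    (hωsum : HasSum ω 1) : ‖T - (⨅ i, M i).starProjection‖ = friedrichsCos ω M ^ 2 :=
  (hT.norm_sub_le hω hωsum).antisymm (hT.sq_friedrichsCos_le_norm_sub hω hωsum)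

end IsSimultaneousProjection

theorem stmt_3_general {H : Type*} [NormedAddCommGroup H] [InnerProductSpace ℝ H] {ι : Type*}
    {ω : ι → ℝ} (hω : ∀ i, 0 ≤ ω i) (hωsum : HasSum ω 1)
    {M : ι → Submodule ℝ H} [∀ i, (M i).HasOrthogonalProjection]
    [(⨅ i, M i).HasOrthogonalProjection]
    {T : H →L[ℝ] H} (hT : IsSimultaneousProjection ω M T) :
    (∀ k : ℕ, 1 ≤ k → ‖T ^ k - (⨅ i, M i).starProjection‖ = friedrichsCos ω M ^ (2 * k)) ∧
    (∀ k : ℕ, 1 ≤ k →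
      ‖T ^ k - (⨅ i, M i).starProjection‖ = ‖T - (⨅ i, M i).starProjection‖ ^ k) ∧
    friedrichsCos ω M ≤ 1 := by
  refine ⟨fun k hk => ?_, fun k hk => hT.norm_pow_sub hωsum hk, friedrichsCos_le_one hω hωsum⟩
  rw [hT.norm_pow_sub hωsum hk, hT.norm_sub_eq_sq_friedrichsCos hω hωsum, pow_mul]

/-- For every `k ≥ 1`, `‖T_ω^k − P_M‖ = c_ω^{2k}`; in particular
`‖T_ω^k − P_M‖ = ‖T_ω − P_M‖^k` and `c_ω ≤ 1`. -/
theorem stmt_3 {H : Type*} [NormedAddCommGroup H] [InnerProductSpace ℝ H] [CompleteSpace H]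
    {ι : Type*} [Countable ι] [Nonempty ι]
    (ω : ι → ℝ) (hω : ∀ i, 0 < ω i) (hωsum : HasSum ω 1)
    (M : ι → Submodule ℝ H) [∀ i, CompleteSpace (M i)]
    [CompleteSpace ↥(⨅ i, M i : Submodule ℝ H)]
    (hMnt : ∀ i, M i ≠ ⊥)
    (T : H →L[ℝ] H)
    (hT : ∀ z : H, T z = ∑' i, ω i • ((Submodule.orthogonalProjectionOnto (M i) z : H)))
    (P : H →L[ℝ] H)
    (hP : P = (⨅ i, M i : Submodule ℝ H).subtypeL.comp
      (Submodule.orthogonalProjectionOnto (⨅ i, M i : Submodule ℝ H))) :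
    (∀ k : ℕ, 1 ≤ k → ‖T ^ k - P‖ = friedrichsCos ω M ^ (2 * k)) ∧
    (∀ k : ℕ, 1 ≤ k → ‖T ^ k - P‖ = ‖T - P‖ ^ k) ∧
    friedrichsCos ω M ≤ 1 := by
  subst hP
  exact stmt_3_general (fun i => (hω i).le) hωsum
    (.of_apply_eq_tsum (fun i => (hω i).le) hωsum.summable hT)
end
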